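/- Let 0 ≤ α ≤ 1/2 and let f ∈ 𝒜 be starlike of order α, with Ω = f(𝔻). Let g be analytic on 𝔻 with g(0) = 0 and g ≺ f, and write g(z) = Σ_{k=1}^∞ b_k z^k. Let r₀ be the unique root in (0, 1) of the equation (1 − r)^{2(1−α)} = 2^{2(1−α)} r. Then for every r with 0 ≤ r ≤ r₀, Σ_{k=1}^∞ |b_k| r^k ≤ dist(0, ∂Ω), the Euclidean distance from f(0) = 0 to the boundary of Ω. (In particular, for α = 0 the Bohr radius for starlike functions is r₀ = 3 − 2√2.) -/

import Mathlib

open Complex Metric Set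

noncomputable section

/-- The open unit disk in `ℂ`. -/
def 𝔻 : Set ℂ := Metric.ball 0 1

/-- The class `𝒜` of analytic functions on `𝔻` normalized by `f 0 = 0`, `f' 0 = 1`. -/
def IsClassA (f : ℂ → ℂ) : Prop :=
  DifferentiableOn ℂ f 𝔻 ∧ f 0 = 0 ∧ deriv f 0 = 1

/-- `g` is subordinate to `F` on the unit disk. -/
def Subordinate (g F : ℂ → ℂ) : Prop :=
  ∃ ω : ℂ → ℂ, DifferentiableOn ℂ ω 𝔻 ∧ ω 0 = 0 ∧ (∀ z ∈ 𝔻, ω z ∈ 𝔻) ∧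
    ∀ z ∈ 𝔻, g z = F (ω z)

/-- `ψ` is a Ma-Minda function: analytic and univalent on `𝔻`, `Re ψ > 0`, `ψ 0 = 1`,
`ψ' 0 > 0`, with real Taylor coefficients (expressed via `ψ (conj z) = conj (ψ z)`). -/
def MaMinda (ψ : ℂ → ℂ) : Prop :=
  DifferentiableOn ℂ ψ 𝔻 ∧ Set.InjOn ψ 𝔻 ∧ (∀ z ∈ 𝔻, 0 < (ψ z).re) ∧
    ψ 0 = 1 ∧ 0 < (deriv ψ 0).re ∧ (deriv ψ 0).im = 0 ∧
    (∀ z ∈ 𝔻, ψ (starRingEnd ℂ z) = starRingEnd ℂ (ψ z))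

/-- The Ma-Minda starlike class `S*(ψ)`. -/
def StarlikeMM (ψ f : ℂ → ℂ) : Prop :=
  IsClassA f ∧ (∀ z ∈ 𝔻, z ≠ 0 → f z ≠ 0) ∧
    Subordinate (fun z => if z = 0 then 1 else z * deriv f z / f z) ψ

/-- The Ma-Minda convex class `C(ψ)`. -/
def ConvexMM (ψ f : ℂ → ℂ) : Prop :=
  IsClassA f ∧ (∀ z ∈ 𝔻, deriv f z ≠ 0) ∧
    Subordinate (fun z => 1 + z * deriv (deriv f) z / deriv f z) ψ

/-- `f` is starlike of order `α`. -/
def StarlikeOrder (α : ℝ) (f : ℂ → ℂ) : Prop :=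
  IsClassA f ∧ (∀ z ∈ 𝔻, z ≠ 0 → f z ≠ 0) ∧
    ∀ z ∈ 𝔻, z ≠ 0 → α < (z * deriv f z / f z).re

/-- `f` is a (normalized) convex function on `𝔻`. -/
def IsConvexFn (f : ℂ → ℂ) : Prop :=
  IsClassA f ∧ (∀ z ∈ 𝔻, deriv f z ≠ 0) ∧
    ∀ z ∈ 𝔻, 0 < (1 + z * deriv (deriv f) z / deriv f z).re

/-!
A starlike function of order `α` is `f z = z * exp (h z)` where `1 - α + z * h' z` has nonnegative
real part. Carathéodory's coefficient bound for the latter gives `‖hₖ‖ ≤ 2 (1 - α) / k`, so the sum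
of the absolute values of the terms of the power series of `f` at radius `r` is at most
`r (1 - r) ^ (-2 (1 - α))`. By Bohr's theorem the corresponding sum for a self-map of the disc
fixing `0` is at most `r` once `r ≤ 1 / 3`; since such sums are submultiplicative, subordination
does not increase the bound. On the other side Harnack's inequality gives the growth bound
`‖z‖ (1 + ‖z‖) ^ (-2 (1 - α)) ≤ ‖f z‖`, so the boundary of the image is at distance at least
`2 ^ (-2 (1 - α))` from `0`; the equation for `r₀` says that the two bounds agree at `r₀`. That
there is a boundary at all is Liouville's theorem for the inverse of the univalent function `f`.
-/

section Majorant

theorem hasSum_pi_single_mul_pow {R : Type*} [Semiring R] [TopologicalSpace R] (b x : R) :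
    HasSum (fun k => (Pi.single 0 b : ℕ → R) k * x ^ k) b := by
  simpa using hasSum_single (f := fun k => (Pi.single 0 b : ℕ → R) k * x ^ k) 0
    fun k hk => by simp [hk]

theorem hasSum_succ_mul_pow {R : Type*} [CommRing R] [TopologicalSpace R] [IsTopologicalRing R]
    {d e : ℕ → R} {x S : R} (hd : HasSum (fun k => d k * x ^ k) S) (he0 : e 0 = 0)
    (he : ∀ k, e (k + 1) = d k) : HasSum (fun k => e k * x ^ k) (x * S) := by
  rw [← hasSum_nat_add_iff' 1]
  simpa [he0, he, pow_succ', mul_left_comm] using hd.mul_left x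

variable {𝕜 : Type*} [NormedField 𝕜] {φ ψ F : 𝕜 → 𝕜} {r A B C : ℝ}

/-- `B` bounds the majorant series `∑ ‖c k‖ r ^ k` of some power series `∑ c k z ^ k` that sums to
`φ` on the closed disk of radius `r`. It is stated for functions rather than for coefficient
sequences so that it can be carried through products and compositions. -/
def HasMajorant (φ : 𝕜 → 𝕜) (r B : ℝ) : Prop :=
  ∃ c : ℕ → 𝕜, Summable (fun k => ‖c k‖ * r ^ k) ∧ ∑' k, ‖c k‖ * r ^ k ≤ B ∧
    ∀ z : 𝕜, ‖z‖ ≤ r → HasSum (fun k => c k * z ^ k) (φ z)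

namespace HasMajorant

theorem norm_le (h : HasMajorant φ r B) {z : 𝕜} (hz : ‖z‖ ≤ r) : ‖φ z‖ ≤ B := by
  obtain ⟨c, hc, hcB, hφ⟩ := h
  rw [← (hφ z hz).tsum_eq]
  refine (tsum_of_norm_bounded hc.hasSum fun k => ?_).trans hcB
  rw [norm_mul, norm_pow]
  gcongr

theorem mono (h : HasMajorant φ r A) (hAB : A ≤ B) : HasMajorant φ r B :=
  let ⟨c, hc, hcA, hφ⟩ := h
  ⟨c, hc, hcA.trans hAB, hφ⟩

theorem congr (h : HasMajorant φ r B) (hψ : ∀ z, ‖z‖ ≤ r → ψ z = φ z) : HasMajorant ψ r B :=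
  let ⟨c, hc, hcB, hφ⟩ := h
  ⟨c, hc, hcB, fun z hz => hψ z hz ▸ hφ z hz⟩

theorem const (a : 𝕜) (r : ℝ) : HasMajorant (fun _ => a) r ‖a‖ := by
  have hnorm : HasSum (fun k => ‖(Pi.single 0 a : ℕ → 𝕜) k‖ * r ^ k) ‖a‖ := by
    simpa only [Pi.apply_single (fun _ => norm) fun _ => norm_zero] using
      hasSum_pi_single_mul_pow ‖a‖ r
  exact ⟨Pi.single 0 a, hnorm.summable, hnorm.tsum_eq.le, fun z _ => hasSum_pi_single_mul_pow a z⟩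

theorem zero_iff : HasMajorant φ 0 B ↔ ‖φ 0‖ ≤ B := by
  refine ⟨fun h => h.norm_le norm_zero.le, fun h => ((const (φ 0) 0).mono h).congr ?_⟩
  intro z hz
  rw [norm_le_zero_iff.1 hz]

theorem const_mul (a : 𝕜) (h : HasMajorant φ r B) :
    HasMajorant (fun z => a * φ z) r (‖a‖ * B) := by
  obtain ⟨c, hc, hcB, hφ⟩ := h
  refine ⟨fun k => a * c k, ?_, ?_, fun z hz => ?_⟩
  · simpa only [norm_mul, mul_assoc] using hc.mul_left ‖a‖
  · simp only [norm_mul, mul_assoc, tsum_mul_left]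
    gcongr
  · simpa only [mul_assoc] using (hφ z hz).mul_left a

theorem id_mul (hr : 0 ≤ r) (h : HasMajorant φ r B) : HasMajorant (fun z => z * φ z) r (r * B) := by
  obtain ⟨c, hc, hcB, hφ⟩ := h
  let d : ℕ → 𝕜 := fun k => k.casesOn 0 c
  have hnorm : HasSum (fun k => ‖d k‖ * r ^ k) (r * ∑' k, ‖c k‖ * r ^ k) :=
    hasSum_succ_mul_pow hc.hasSum norm_zero fun _ => rfl
  refine ⟨d, hnorm.summable, ?_, fun z hz => hasSum_succ_mul_pow (hφ z hz) rfl fun _ => rfl⟩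
  rw [hnorm.tsum_eq]
  gcongr

theorem pow_mul (hr : 0 ≤ r) (h : HasMajorant φ r B) (n : ℕ) :
    HasMajorant (fun z => z ^ n * φ z) r (r ^ n * B) := by
  induction n with
  | zero => simpa only [pow_zero, one_mul] using h
  | succ n ih => simpa only [pow_succ', mul_assoc] using ih.id_mul hr

theorem tsum [CompleteSpace 𝕜] {ι : Type*} {φ : ι → 𝕜 → 𝕜} {B : ι → ℝ} (hr : 0 ≤ r)
    (h : ∀ i, HasMajorant (φ i) r (B i)) (hB : Summable B) :
    HasMajorant (fun z => ∑' i, φ i z) r (∑' i, B i) := by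
  obtain rfl | hr := hr.eq_or_lt
  · exact zero_iff.2 (tsum_of_norm_bounded hB.hasSum fun i => zero_iff.1 (h i))
  choose c hc hcB hφ using h
  have hu : Summable fun p : ι × ℕ => ‖c p.1 p.2‖ * r ^ p.2 :=
    (summable_prod_of_nonneg fun p => by positivity).2
      ⟨hc, .of_nonneg_of_le (fun i => tsum_nonneg fun k => by positivity) hcB hB⟩
  have hcol (k : ℕ) : Summable fun i => ‖c i k‖ :=
    (summable_mul_right_iff (pow_pos hr k).ne').1 (hu.prod_symm.prod_factor k)
  have hle (k : ℕ) : ‖∑' i, c i k‖ * r ^ k ≤ ∑' i, ‖c i k‖ * r ^ k := by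
    rw [tsum_mul_right]
    gcongr
    exact norm_tsum_le_tsum_norm (hcol k)
  have hu' : Summable fun k => ∑' i, ‖c i k‖ * r ^ k := hu.prod_symm.prod
  have hs : Summable fun k => ‖∑' i, c i k‖ * r ^ k :=
    .of_nonneg_of_le (fun k => by positivity) hle hu'
  refine ⟨fun k => ∑' i, c i k, hs, ?_, fun z hz => ?_⟩
  · calc ∑' k, ‖∑' i, c i k‖ * r ^ k
        ≤ ∑' k, ∑' i, ‖c i k‖ * r ^ k := hs.tsum_le_tsum hle hu'
      _ = ∑' i, ∑' k, ‖c i k‖ * r ^ k :=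
          Summable.tsum_comm (f := fun i k => ‖c i k‖ * r ^ k) hu
      _ ≤ ∑' i, B i := hu.prod.tsum_le_tsum hcB hB
  · have hv : Summable fun p : ι × ℕ => c p.1 p.2 * z ^ p.2 := by
      refine .of_norm_bounded hu fun p => ?_
      rw [norm_mul, norm_pow]
      gcongr
    have hsum : HasSum (fun k => ∑' i, c i k * z ^ k) (∑' i, ∑' k, c i k * z ^ k) := by
      rw [← Summable.tsum_comm (f := fun i k => c i k * z ^ k) hv]
      exact hv.prod_symm.prod.hasSum
    simpa only [tsum_mul_right, (hφ _ z hz).tsum_eq] using hsum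

theorem mul [CompleteSpace 𝕜] (hr : 0 ≤ r) (hφ : HasMajorant φ r A) (hψ : HasMajorant ψ r B) :
    HasMajorant (fun z => φ z * ψ z) r (A * B) := by
  have hB : 0 ≤ B := (norm_nonneg _).trans (hψ.norm_le (z := 0) (by simpa using hr))
  obtain ⟨c, hc, hcA, hφ⟩ := hφ
  have hterm (k : ℕ) : HasMajorant (fun z => c k * (z ^ k * ψ z)) r (‖c k‖ * (r ^ k * B)) :=
    (hψ.pow_mul hr k).const_mul (c k)
  have hsum : ∑' k, ‖c k‖ * (r ^ k * B) ≤ A * B := by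
    simp only [← mul_assoc, tsum_mul_right]
    gcongr
  refine ((tsum hr hterm ?_).mono hsum).congr fun z hz => ?_
  · simpa only [mul_assoc] using hc.mul_right B
  · simp only [← mul_assoc, tsum_mul_right, (hφ z hz).tsum_eq]

theorem pow [CompleteSpace 𝕜] (hr : 0 ≤ r) (h : HasMajorant φ r B) (n : ℕ) :
    HasMajorant (fun z => φ z ^ n) r (B ^ n) := by
  induction n with
  | zero => simpa only [pow_zero, norm_one] using const (1 : 𝕜) r
  | succ n ih => simpa only [pow_succ] using ih.mul hr h

theorem comp [CompleteSpace 𝕜] (hr : 0 ≤ r) (hF : HasMajorant F B C) (hφ : HasMajorant φ r B) :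
    HasMajorant (fun z => F (φ z)) r C := by
  obtain ⟨a, ha, haC, hF⟩ := hF
  exact ((tsum hr (fun n => (hφ.pow hr n).const_mul (a n)) ha).mono haC).congr
    fun z hz => (hF _ (hφ.norm_le hz)).tsum_eq.symm

end HasMajorant

theorem coeff_eq_of_hasSum_pow {𝕜 : Type*} [NontriviallyNormedField 𝕜] {φ : 𝕜 → 𝕜} {a b : ℕ → 𝕜}
    {r : ℝ} (hr : 0 < r) (ha : ∀ z, ‖z‖ < r → HasSum (fun k => a k * z ^ k) (φ z))
    (hb : ∀ z, ‖z‖ < r → HasSum (fun k => b k * z ^ k) (φ z)) : a = b := by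
  have hasFPowerSeriesAt {a : ℕ → 𝕜} (ha : ∀ z, ‖z‖ < r → HasSum (fun k => a k * z ^ k) (φ z)) :
      HasFPowerSeriesAt φ (.ofScalars 𝕜 a) 0 := by
    rw [hasFPowerSeriesAt_iff]
    filter_upwards [ball_mem_nhds (0 : 𝕜) hr] with z hz
    simpa [mul_comm] using ha z (mem_ball_zero_iff.1 hz)
  have h := (hasFPowerSeriesAt ha).eq_formalMultilinearSeries (hasFPowerSeriesAt hb)
  ext n
  simpa using congrArg (fun p => p.coeff n) h

theorem HasMajorant.tsum_norm_le {𝕜 : Type*} [NontriviallyNormedField 𝕜] {φ : 𝕜 → 𝕜} {b : ℕ → 𝕜}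
    {r B : ℝ} (hr : 0 ≤ r) (h : HasMajorant φ r B)
    (hb : ∀ z, ‖z‖ ≤ r → HasSum (fun k => b k * z ^ k) (φ z)) :
    Summable (fun k => ‖b k‖ * r ^ k) ∧ ∑' k, ‖b k‖ * r ^ k ≤ B := by
  obtain rfl | hr := hr.eq_or_lt
  · have hb0 : b 0 = φ 0 := by simpa [zero_pow_eq] using (hb 0 norm_zero.le).tsum_eq
    have hterm : (fun k => ‖b k‖ * (0 : ℝ) ^ k) = Pi.single 0 ‖φ 0‖ := by
      ext (_ | k) <;> simp [hb0]
    rw [hterm]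
    exact ⟨(hasSum_pi_single 0 _).summable, (tsum_pi_single 0 _).trans_le (zero_iff.1 h)⟩
  · obtain ⟨c, hc, hcB, hφ⟩ := h
    rw [coeff_eq_of_hasSum_pow hr (fun z hz => hb z hz.le) fun z hz => hφ z hz.le]
    exact ⟨hc, hcB⟩

theorem hasMajorant_exp (B : ℝ) : HasMajorant exp B (Real.exp B) := by
  have hnorm (k : ℕ) : ‖((k.factorial : ℂ))⁻¹‖ * B ^ k = B ^ k / k.factorial := by
    rw [norm_inv, norm_natCast, inv_mul_eq_div]
  have hreal : HasSum (fun k : ℕ => B ^ k / k.factorial) (Real.exp B) := by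
    simpa only [Real.exp_eq_exp_ℝ] using NormedSpace.expSeries_div_hasSum_exp B
  refine ⟨fun k => (k.factorial : ℂ)⁻¹, ?_, ?_, fun z _ => ?_⟩
  · simpa only [hnorm] using hreal.summable
  · simpa only [hnorm] using hreal.tsum_eq.le
  · simpa only [exp_eq_exp_ℂ, inv_mul_eq_div] using NormedSpace.expSeries_div_hasSum_exp z

end Majorant

section TaylorCoeff

variable {φ p : ℂ → ℂ} {R r ρ : ℝ} {k : ℕ}

/-- The coefficient of `z ^ k` in the Taylor series of `φ` at the origin. -/
def taylorCoeff (φ : ℂ → ℂ) (k : ℕ) : ℂ :=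
  (k.factorial : ℂ)⁻¹ * iteratedDeriv k φ 0

theorem taylorCoeff_zero (φ : ℂ → ℂ) : taylorCoeff φ 0 = φ 0 := by
  simp [taylorCoeff]

theorem taylorCoeff_const_add (a : ℂ) (φ : ℂ → ℂ) (hk : k ≠ 0) :
    taylorCoeff (fun z => a + φ z) k = taylorCoeff φ k := by
  rw [taylorCoeff, iteratedDeriv_const_add (Nat.pos_of_ne_zero hk), taylorCoeff]

theorem taylorCoeff_const_mul (a : ℂ) (φ : ℂ → ℂ) (k : ℕ) :
    taylorCoeff (fun z => a * φ z) k = a * taylorCoeff φ k := by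
  rw [taylorCoeff, iteratedDeriv_const_mul_field, taylorCoeff, mul_left_comm]

theorem taylorCoeff_deriv (φ : ℂ → ℂ) (k : ℕ) :
    taylorCoeff (deriv φ) k = (k + 1 : ℕ) * taylorCoeff φ (k + 1) := by
  rw [taylorCoeff, taylorCoeff, iteratedDeriv_succ', Nat.factorial_succ]
  push_cast
  field_simp

theorem hasSum_taylorCoeff (hφ : DifferentiableOn ℂ φ (ball 0 R)) {z : ℂ} (hz : ‖z‖ < R) :
    HasSum (fun k => taylorCoeff φ k * z ^ k) (φ z) := by
  simpa only [taylorCoeff, sub_zero, smul_eq_mul, mul_assoc, mul_comm (z ^ _)] using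
    hasSum_taylorSeries_on_ball hφ (mem_ball_zero_iff.2 hz)

theorem taylorCoeff_id_mul_deriv (hR : 0 < R) (hφ : DifferentiableOn ℂ φ (ball 0 R)) (k : ℕ) :
    taylorCoeff (fun z => z * deriv φ z) k = k * taylorCoeff φ k := by
  have hφ' : DifferentiableOn ℂ (deriv φ) (ball 0 R) := hφ.deriv isOpen_ball
  refine congrFun (coeff_eq_of_hasSum_pow (b := fun k => k * taylorCoeff φ k) hR
    (fun z hz => hasSum_taylorCoeff (differentiableOn_id.fun_mul hφ') hz) fun z hz => ?_) k
  exact hasSum_succ_mul_pow (hasSum_taylorCoeff hφ' hz) (by simp) fun k =>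
    (taylorCoeff_deriv φ k).symm

theorem hasMajorant_of_norm_taylorCoeff_le {t : ℕ → ℝ} {T : ℝ} (hr : 0 ≤ r) (hrR : r < R)
    (hφ : DifferentiableOn ℂ φ (ball 0 R)) (ht : HasSum t T)
    (hle : ∀ k, ‖taylorCoeff φ (k + 1)‖ * r ^ (k + 1) ≤ t k) :
    HasMajorant φ r (‖φ 0‖ + T) := by
  have hs : Summable fun k => ‖taylorCoeff φ (k + 1)‖ * r ^ (k + 1) :=
    .of_nonneg_of_le (fun k => by positivity) hle ht.summable
  have hs' : Summable fun k => ‖taylorCoeff φ k‖ * r ^ k := (summable_nat_add_iff 1).1 hs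
  refine ⟨taylorCoeff φ, hs', ?_, fun z hz => hasSum_taylorCoeff hφ (hz.trans_lt hrR)⟩
  rw [hs'.tsum_eq_zero_add, pow_zero, mul_one, taylorCoeff_zero, ← ht.tsum_eq]
  exact add_le_add_right (hs.tsum_le_tsum hle ht.summable) _

theorem circleAverage_inv_pow_mul (hρ : 0 < ρ) (hp : DiffContOnCl ℂ p (ball 0 ρ)) (k : ℕ) :
    Real.circleAverage (fun z => (z ^ k)⁻¹ * p z) 0 ρ = taylorCoeff p k := by
  have hcauchy := hp.circleIntegral_one_div_sub_center_pow_smul hρ k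
  simp only [sub_zero, smul_eq_mul, one_div, pow_succ', mul_inv] at hcauchy
  rw [Real.circleAverage_eq_circleIntegral hρ.ne', taylorCoeff]
  simp only [sub_zero, smul_eq_mul, ← mul_assoc, hcauchy]
  field_simp

theorem circleAverage_pow_mul (hp : DiffContOnCl ℂ p (ball 0 |ρ|)) (hk : k ≠ 0) :
    Real.circleAverage (fun z => z ^ k * p z) 0 ρ = 0 := by
  have hd : DiffContOnCl ℂ (fun z => z ^ k * p z) (ball 0 |ρ|) :=
    (differentiable_id.pow k).diffContOnCl.smul hp
  rw [hd.circleAverage, zero_pow hk, zero_mul]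

theorem continuousOn_sphere_of_diffContOnCl (hρ : ρ ≠ 0) (hp : DiffContOnCl ℂ p (ball 0 |ρ|)) :
    ContinuousOn p (sphere 0 |ρ|) :=
  (closure_ball (0 : ℂ) (abs_ne_zero.2 hρ) ▸ hp.continuousOn).mono sphere_subset_closedBall

theorem circleAverage_re_nonneg {G : ℂ → ℂ} (hG : CircleIntegrable G 0 ρ)
    (h : ∀ z ∈ sphere 0 |ρ|, 0 ≤ (G z).re) : 0 ≤ (Real.circleAverage G 0 ρ).re := by
  rw [← reCLM_apply, ← reCLM.circleAverage_comp_comm hG]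
  exact Real.circleAverage_nonneg_of_nonneg h

theorem continuousOn_inv_pow_mul_sphere (hρ : ρ ≠ 0) (hp : ContinuousOn p (sphere 0 |ρ|)) (k : ℕ) :
    ContinuousOn (fun z => (z ^ k)⁻¹ * p z) (sphere 0 |ρ|) :=
  ((continuousOn_id.pow k).inv₀ fun _ hz =>
    pow_ne_zero k (ne_of_mem_sphere hz (abs_ne_zero.2 hρ))).mul hp

theorem circleAverage_trigonometric_mul (hρ : 0 < ρ) (hp : DiffContOnCl ℂ p (ball 0 ρ))
    (hk : k ≠ 0) (a b : ℂ) :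
    CircleIntegrable (fun z => (2 + a * (z ^ k)⁻¹ + b * z ^ k) * p z) 0 ρ ∧
      Real.circleAverage (fun z => (2 + a * (z ^ k)⁻¹ + b * z ^ k) * p z) 0 ρ =
        2 * p 0 + a * taylorCoeff p k := by
  have hp' : DiffContOnCl ℂ p (ball 0 |ρ|) := (abs_of_pos hρ).symm ▸ hp
  have hcont := continuousOn_sphere_of_diffContOnCl hρ.ne' hp'
  have hi₀ : CircleIntegrable (fun z => (2 : ℂ) • p z) 0 ρ := hcont.circleIntegrable'.const_smul
  have hi₁ : CircleIntegrable (fun z => a • ((z ^ k)⁻¹ * p z)) 0 ρ :=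
    (continuousOn_inv_pow_mul_sphere hρ.ne' hcont k).circleIntegrable'.const_smul
  have hi₂ : CircleIntegrable (fun z => b • (z ^ k * p z)) 0 ρ :=
    ((continuousOn_id.pow k).mul hcont).circleIntegrable'.const_smul
  have hi₀₁ : CircleIntegrable (fun z => (2 : ℂ) • p z + a • ((z ^ k)⁻¹ * p z)) 0 ρ := hi₀.add hi₁
  have hadd : (fun z => (2 + a * (z ^ k)⁻¹ + b * z ^ k) * p z) =
      fun z => ((2 : ℂ) • p z + a • ((z ^ k)⁻¹ * p z)) + b • (z ^ k * p z) := by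
    ext z
    simp only [smul_eq_mul]
    ring
  rw [hadd]
  refine ⟨hi₀₁.add hi₂, ?_⟩
  rw [Real.circleAverage_fun_add hi₀₁ hi₂, Real.circleAverage_fun_add hi₀ hi₁,
    Real.circleAverage_fun_smul, Real.circleAverage_fun_smul, Real.circleAverage_fun_smul,
    hp'.circleAverage, circleAverage_inv_pow_mul hρ hp, circleAverage_pow_mul hp' hk, smul_zero,
    add_zero]
  simp only [smul_eq_mul]

theorem two_add_self_add_inv_eq {x : ℂ} (hx : ‖x‖ = 1) :
    2 + x + x⁻¹ = ((2 * (1 + x.re) : ℝ) : ℂ) := by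
  rw [inv_eq_conj hx, add_assoc, add_conj]
  push_cast
  ring

-- Average `p` against the nonnegative weight `2 + x + x⁻¹`, where `x = u * (ρ / z) ^ k`.
theorem two_mul_re_add_re_mul_taylorCoeff_nonneg (hρ : 0 < ρ) (hp : DiffContOnCl ℂ p (ball 0 ρ))
    (hre : ∀ z ∈ sphere 0 ρ, 0 ≤ (p z).re) (hk : k ≠ 0) {u : ℂ} (hu : ‖u‖ = 1) :
    0 ≤ 2 * (p 0).re + (u * taylorCoeff p k).re * ρ ^ k := by
  obtain ⟨hint, havg⟩ := circleAverage_trigonometric_mul hρ hp hk (u * ρ ^ k) (u * ρ ^ k)⁻¹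
  have hnonneg := circleAverage_re_nonneg hint fun z hz => ?_
  · rwa [havg, ← ofReal_pow, mul_right_comm, add_re, re_mul_ofReal, ← ofReal_ofNat,
      re_ofReal_mul] at hnonneg
  · rw [abs_of_pos hρ] at hz
    have hx : ‖u * ρ ^ k * (z ^ k)⁻¹‖ = 1 := by
      rw [norm_mul, norm_mul, norm_inv, norm_pow, norm_pow, hu, Complex.norm_of_nonneg hρ.le,
        mem_sphere_zero_iff_norm.1 hz, one_mul, mul_inv_cancel₀ (pow_pos hρ k).ne']
    have hweight : 2 + u * ρ ^ k * (z ^ k)⁻¹ + (u * ρ ^ k)⁻¹ * z ^ k =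
        ((2 * (1 + (u * ρ ^ k * (z ^ k)⁻¹).re) : ℝ) : ℂ) := by
      rw [← two_add_self_add_inv_eq hx, mul_inv _ (z ^ k)⁻¹, inv_inv]
    have hre_ge : -1 ≤ (u * ρ ^ k * (z ^ k)⁻¹).re := hx ▸ (abs_le.1 (abs_re_le_norm _)).1
    rw [hweight, re_ofReal_mul]
    exact mul_nonneg (by linarith) (hre z hz)

theorem norm_taylorCoeff_mul_pow_le_of_sphere (hρ : 0 < ρ) (hp : DiffContOnCl ℂ p (ball 0 ρ))
    (hre : ∀ z ∈ sphere 0 ρ, 0 ≤ (p z).re) (hk : k ≠ 0) :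
    ‖taylorCoeff p k‖ * ρ ^ k ≤ 2 * (p 0).re := by
  obtain ⟨u, hu, hnorm⟩ := exists_norm_eq_mul_self (taylorCoeff p k)
  have h := two_mul_re_add_re_mul_taylorCoeff_nonneg hρ hp hre hk ((norm_neg u).trans hu)
  rw [neg_mul, ← hnorm, neg_re, ofReal_re] at h
  linarith

theorem norm_taylorCoeff_mul_pow_le (hR : 0 < R) (hp : DifferentiableOn ℂ p (ball 0 R))
    (hre : ∀ z ∈ ball 0 R, 0 ≤ (p z).re) (hk : k ≠ 0) :
    ‖taylorCoeff p k‖ * R ^ k ≤ 2 * (p 0).re := by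
  have hlim : Filter.Tendsto (fun ρ : ℝ => ‖taylorCoeff p k‖ * ρ ^ k) (nhdsWithin R (Iio R))
      (nhds (‖taylorCoeff p k‖ * R ^ k)) :=
    (Continuous.tendsto (by fun_prop) R).mono_left nhdsWithin_le_nhds
  refine le_of_tendsto hlim ?_
  filter_upwards [Ioo_mem_nhdsLT hR] with ρ hρ
  exact norm_taylorCoeff_mul_pow_le_of_sphere hρ.1
    (hp.diffContOnCl_ball (closedBall_subset_ball hρ.2))
    (fun z hz => hre z (sphere_subset_ball hρ.2 hz)) hk

theorem norm_taylorCoeff_mul_pow_le_of_norm_le_one (hR : 0 < R)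
    (hφ : DifferentiableOn ℂ φ (ball 0 R)) (hle : ∀ z ∈ ball 0 R, ‖φ z‖ ≤ 1) (hk : k ≠ 0) :
    ‖taylorCoeff φ k‖ * R ^ k ≤ 2 * (1 - ‖φ 0‖) := by
  obtain ⟨u, hu, hnorm⟩ := exists_norm_eq_mul_self (φ 0)
  have hp : DifferentiableOn ℂ (fun z => 1 + -u * φ z) (ball 0 R) := (hφ.const_mul _).const_add _
  have h := norm_taylorCoeff_mul_pow_le hR hp (fun z hz => ?_) hk
  · rw [taylorCoeff_const_add _ _ hk, taylorCoeff_const_mul, norm_mul, norm_neg, hu, one_mul,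
      neg_mul, ← hnorm, add_re, one_re, neg_re, ofReal_re, ← sub_eq_add_neg] at h
    exact h
  · have hle' : ‖-u * φ z‖ ≤ 1 := by simpa only [norm_mul, norm_neg, hu, one_mul] using hle z hz
    rw [add_re, one_re]
    linarith [(abs_le.1 (abs_re_le_norm (-u * φ z))).1]

theorem hasMajorant_one_of_norm_le_one (hφ : DifferentiableOn ℂ φ (ball 0 1))
    (hle : ∀ z ∈ ball 0 1, ‖φ z‖ ≤ 1) (hr : 0 ≤ r) (hr3 : r ≤ 1 / 3) : HasMajorant φ r 1 := by
  have h0 : ‖φ 0‖ ≤ 1 := hle 0 (mem_ball_self one_pos)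
  have hcoeff (k : ℕ) : ‖taylorCoeff φ (k + 1)‖ * r ^ (k + 1) ≤ 2 * (1 - ‖φ 0‖) * r * r ^ k := by
    have h := norm_taylorCoeff_mul_pow_le_of_norm_le_one one_pos hφ hle k.succ_ne_zero
    rw [one_pow, mul_one] at h
    rw [mul_assoc _ r, ← pow_succ']
    gcongr
  have hsum := (hasSum_geometric_of_lt_one hr (by linarith)).mul_left (2 * (1 - ‖φ 0‖) * r)
  refine (hasMajorant_of_norm_taylorCoeff_le hr (by linarith) hφ hsum hcoeff).mono ?_
  have hratio : 2 * r * (1 - r)⁻¹ ≤ 1 := by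
    rw [← div_eq_mul_inv, div_le_one₀] <;> linarith
  calc ‖φ 0‖ + 2 * (1 - ‖φ 0‖) * r * (1 - r)⁻¹
      = ‖φ 0‖ + (1 - ‖φ 0‖) * (2 * r * (1 - r)⁻¹) := by ring
    _ ≤ ‖φ 0‖ + (1 - ‖φ 0‖) * 1 := by gcongr
    _ = 1 := by ring

theorem id_mul_dslope_eq {f : ℂ → ℂ} (hf0 : f 0 = 0) (z : ℂ) : z * dslope f 0 z = f z := by
  simpa only [sub_zero, smul_eq_mul, hf0] using sub_smul_dslope f 0 z

theorem hasMajorant_self_of_mapsTo_ball {ω : ℂ → ℂ} (hω : DifferentiableOn ℂ ω (ball 0 1))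
    (hω0 : ω 0 = 0) (hmaps : MapsTo ω (ball 0 1) (ball 0 1)) (hr : 0 ≤ r) (hr3 : r ≤ 1 / 3) :
    HasMajorant ω r r := by
  have hd : DifferentiableOn ℂ (dslope ω 0) (ball 0 1) :=
    (differentiableOn_dslope (ball_mem_nhds _ one_pos)).2 hω
  have hle (z : ℂ) (hz : z ∈ ball 0 1) : ‖dslope ω 0 z‖ ≤ 1 := by
    have hmaps' : MapsTo ω (ball 0 1) (closedBall (ω 0) 1) :=
      hω0.symm ▸ hmaps.mono_right ball_subset_closedBall
    simpa only [div_one] using norm_dslope_le_div_of_mapsTo_ball hω hmaps' hz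
  have h := (hasMajorant_one_of_norm_le_one hd hle hr hr3).id_mul hr
  rw [mul_one] at h
  exact h.congr fun z _ => (id_mul_dslope_eq hω0 z).symm

theorem Subordinate.hasMajorant {g F : ℂ → ℂ} {B : ℝ} (hsub : Subordinate g F)
    (hF : HasMajorant F r B) (hr : 0 ≤ r) (hr3 : r ≤ 1 / 3) : HasMajorant g r B := by
  obtain ⟨ω, hω, hω0, hmaps, hg⟩ := hsub
  exact (hF.comp hr (hasMajorant_self_of_mapsTo_ball hω hω0 hmaps hr hr3)).congr fun z hz =>
    hg z (mem_ball_zero_iff.2 (by linarith))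

end TaylorCoeff

section Harnack

variable {p : ℂ → ℂ} {z : ℂ} {R ρ : ℝ}

theorem harnack_lower_bound_of_sphere (hp : DiffContOnCl ℂ p (ball 0 ρ))
    (hre : ∀ z ∈ sphere 0 ρ, 0 ≤ (p z).re) (hz : z ∈ ball 0 ρ) :
    (p 0).re * ((ρ - ‖z‖) / (ρ + ‖z‖)) ≤ (p z).re := by
  have hρ : 0 < ρ := pos_of_mem_ball hz
  have hp' : DiffContOnCl ℂ p (ball 0 |ρ|) := (abs_of_pos hρ).symm ▸ hp
  have hcont := continuousOn_sphere_of_diffContOnCl hρ.ne' hp'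
  have hi₁ : CircleIntegrable (fun ζ => (herglotzRieszKernel 0 z ζ).re • p ζ) 0 ρ :=
    ((continuous_re.comp_continuousOn (continuousOn_herglotzRieszKernel_sphere hz)).smul
      hcont).circleIntegrable'
  have hi₂ : CircleIntegrable (fun ζ => ((ρ - ‖z‖) / (ρ + ‖z‖)) • p ζ) 0 ρ :=
    (continuousOn_const.fun_smul hcont).circleIntegrable'
  have hpoisson : Real.circleAverage (fun ζ => (herglotzRieszKernel 0 z ζ).re • p ζ) 0 ρ = p z :=
    hp.circleAverage_re_herglotzRieszKernel_smul hz
  have hnonneg := circleAverage_re_nonneg (hi₁.sub hi₂) fun ζ hζ => ?_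
  · rw [Real.circleAverage_sub hi₁ hi₂, hpoisson, Real.circleAverage_fun_smul, hp'.circleAverage,
      sub_re, smul_re, smul_eq_mul] at hnonneg
    linarith
  · rw [abs_of_pos hρ] at hζ
    have hkernel := le_re_herglotzRieszKernel hζ hz
    rw [← herglotzRieszKernel_def, sub_zero] at hkernel
    simp only [Pi.sub_apply, ← sub_smul, smul_re, smul_eq_mul]
    exact mul_nonneg (sub_nonneg.2 hkernel) (hre ζ hζ)

theorem harnack_lower_bound (hp : DifferentiableOn ℂ p (ball 0 R))
    (hre : ∀ z ∈ ball 0 R, 0 ≤ (p z).re) (hz : z ∈ ball 0 R) :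
    (p 0).re * ((R - ‖z‖) / (R + ‖z‖)) ≤ (p z).re := by
  have hzR : ‖z‖ < R := mem_ball_zero_iff.1 hz
  have hlim : Filter.Tendsto (fun ρ : ℝ => (p 0).re * ((ρ - ‖z‖) / (ρ + ‖z‖)))
      (nhdsWithin R (Iio R)) (nhds ((p 0).re * ((R - ‖z‖) / (R + ‖z‖)))) := by
    refine ContinuousAt.tendsto ?_ |>.mono_left nhdsWithin_le_nhds
    have : R + ‖z‖ ≠ 0 := by positivity [pos_of_mem_ball hz]
    fun_prop (disch := assumption)
  refine le_of_tendsto hlim ?_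
  filter_upwards [Ioo_mem_nhdsLT hzR] with ρ hρ
  exact harnack_lower_bound_of_sphere (hp.diffContOnCl_ball (closedBall_subset_ball hρ.2))
    (fun ζ hζ => hre ζ (sphere_subset_ball hρ.2 hζ)) (mem_ball_zero_iff.2 hρ.1)

end Harnack

section Univalence

variable {G G' : ℂ → ℂ} {s : Set ℂ} {a c v : ℂ} {t : ℝ}

theorem hasDerivAt_re_comp_add_real_mul (hG : HasDerivAt G c (a + t * v)) :
    HasDerivAt (fun t : ℝ => (G (a + t * v)).re) (c * v).re t := by
  have hline : HasDerivAt (fun s : ℂ => a + s * v) v (t : ℂ) :=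
    (hasDerivAt_mul_const v).const_add a
  exact (hG.comp (t : ℂ) hline).real_of_complex

theorem injOn_of_re_deriv_pos (hs : Convex ℝ s) (hG : ∀ z ∈ s, HasDerivAt G (G' z) z)
    (hpos : ∀ z ∈ s, 0 < (G' z).re) : InjOn G s := by
  intro a ha b hb hab
  by_contra hne
  have hv : b - a ≠ 0 := sub_ne_zero.2 (Ne.symm hne)
  have hmem (t : ℝ) (ht : t ∈ Icc (0 : ℝ) 1) : a + t * (b - a) ∈ s := by
    simpa only [real_smul] using hs.add_smul_sub_mem ha hb ht
  have hderiv (t : ℝ) (ht : t ∈ Icc (0 : ℝ) 1) :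
      HasDerivAt (fun t : ℝ => (G (a + t * (b - a)) / (b - a)).re)
        (G' (a + t * (b - a))).re t := by
    have h := hasDerivAt_re_comp_add_real_mul ((hG _ (hmem t ht)).div_const (b - a))
    rwa [div_mul_cancel₀ _ hv] at h
  have hmono : StrictMonoOn (fun t : ℝ => (G (a + t * (b - a)) / (b - a)).re) (Icc 0 1) :=
    strictMonoOn_of_hasDerivWithinAt_pos (convex_Icc 0 1)
      (fun t ht => (hderiv t ht).continuousAt.continuousWithinAt)
      (fun t ht => (hderiv t (interior_subset ht)).hasDerivWithinAt)
      fun t ht => hpos _ (hmem t (interior_subset ht))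
  have hlt := hmono (left_mem_Icc.2 zero_le_one) (right_mem_Icc.2 zero_le_one) zero_lt_one
  simp [hab] at hlt

end Univalence

theorem exists_differentiableOn_exp_eq {F : ℂ → ℂ} {c : ℂ} {R : ℝ}
    (hF : DifferentiableOn ℂ F (ball c R)) (hne : ∀ z ∈ ball c R, F z ≠ 0) :
    ∃ h : ℂ → ℂ, DifferentiableOn ℂ h (ball c R) ∧ h c = log (F c) ∧
      ∀ z ∈ ball c R, F z = exp (h z) := by
  obtain ⟨h, hc, hh⟩ :=
    (((hF.deriv isOpen_ball).fun_div hF hne).isExactOn_ball).with_val_at c (log (F c))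
  have hderiv (z : ℂ) (hz : z ∈ ball c R) : HasDerivAt (fun z => F z * exp (-h z)) 0 z := by
    have hFz := (hF.differentiableAt (isOpen_ball.mem_nhds hz)).hasDerivAt
    refine (hFz.mul (hh z hz).fun_neg.cexp).congr_deriv ?_
    field_simp [hne z hz]
    ring
  refine ⟨h, fun z hz => (hh z hz).differentiableAt.differentiableWithinAt, hc, fun z hz => ?_⟩
  have hcR : c ∈ ball c R := mem_ball_self (pos_of_mem_ball hz)
  have hconst : F z * exp (-h z) = 1 := by
    rw [isOpen_ball.is_const_of_deriv_eq_zero (convex_ball c R).isPreconnected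
      (fun w hw => (hderiv w hw).differentiableAt.differentiableWithinAt)
      (fun w hw => (hderiv w hw).deriv) hz hcR, hc, exp_neg, exp_log (hne c hcR),
      mul_inv_cancel₀ (hne c hcR)]
  rwa [exp_neg, ← div_eq_mul_inv, div_eq_one_iff_eq (exp_ne_zero _)] at hconst

section StarlikeExponent

variable {h : ℂ → ℂ} {z : ℂ} {r β : ℝ}

theorem norm_taylorCoeff_succ_le_of_re_id_mul_deriv (hh : DifferentiableOn ℂ h (ball 0 1))
    (hre : ∀ z ∈ ball 0 1, -β ≤ (z * deriv h z).re) (k : ℕ) :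
    ‖taylorCoeff h (k + 1)‖ ≤ 2 * β / (k + 1) := by
  have hp : DifferentiableOn ℂ (fun z => (β : ℂ) + z * deriv h z) (ball 0 1) :=
    (differentiableOn_id.fun_mul (hh.deriv isOpen_ball)).const_add _
  have hcoeff := norm_taylorCoeff_mul_pow_le one_pos hp (fun z hz => ?_) k.succ_ne_zero
  · rw [taylorCoeff_const_add _ _ k.succ_ne_zero, taylorCoeff_id_mul_deriv one_pos hh, one_pow,
      mul_one, zero_mul, add_zero, ofReal_re, norm_mul, norm_natCast, Nat.cast_succ] at hcoeff
    rwa [le_div_iff₀' (by positivity)]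
  · rw [add_re, ofReal_re]
    linarith [hre z hz]

theorem hasMajorant_of_re_id_mul_deriv (hh : DifferentiableOn ℂ h (ball 0 1)) (h0 : h 0 = 0)
    (hre : ∀ z ∈ ball 0 1, -β ≤ (z * deriv h z).re) (hr : 0 ≤ r) (hr1 : r < 1) :
    HasMajorant h r (2 * β * -Real.log (1 - r)) := by
  have hlog := (Real.hasSum_pow_div_log_of_abs_lt_one ((abs_of_nonneg hr).trans_lt hr1)).mul_left
    (2 * β)
  refine (hasMajorant_of_norm_taylorCoeff_le hr hr1 hh hlog fun k => ?_).mono (by simp [h0])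
  calc ‖taylorCoeff h (k + 1)‖ * r ^ (k + 1) ≤ 2 * β / (k + 1) * r ^ (k + 1) := by
        gcongr
        exact norm_taylorCoeff_succ_le_of_re_id_mul_deriv hh hre k
    _ = 2 * β * (r ^ (k + 1) / (k + 1)) := by ring

theorem re_id_mul_deriv_lower_bound (hh : DifferentiableOn ℂ h (ball 0 1))
    (hre : ∀ z ∈ ball 0 1, -β ≤ (z * deriv h z).re) (hz : z ∈ ball 0 1) :
    -(2 * β * (‖z‖ / (1 + ‖z‖))) ≤ (z * deriv h z).re := by
  have hp : DifferentiableOn ℂ (fun z => (β : ℂ) + z * deriv h z) (ball 0 1) :=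
    (differentiableOn_id.fun_mul (hh.deriv isOpen_ball)).const_add _
  have hharnack := harnack_lower_bound hp (fun w hw => ?_) hz
  · rw [zero_mul, add_zero, add_re, ofReal_re] at hharnack
    have hratio : (1 - ‖z‖) / (1 + ‖z‖) = 1 - 2 * (‖z‖ / (1 + ‖z‖)) := by
      field_simp
      ring
    rw [hratio] at hharnack
    linarith
  · rw [add_re, ofReal_re]
    linarith [hre w hw]

theorem neg_log_le_re_of_re_id_mul_deriv (hh : DifferentiableOn ℂ h (ball 0 1)) (h0 : h 0 = 0)
    (hre : ∀ z ∈ ball 0 1, -β ≤ (z * deriv h z).re) (hz : z ∈ ball 0 1) :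
    -(2 * β * Real.log (1 + ‖z‖)) ≤ (h z).re := by
  have hmem (t : ℝ) (ht : t ∈ Icc (0 : ℝ) 1) : t * z ∈ ball 0 1 := by
    simpa only [real_smul] using (convex_ball (0 : ℂ) 1).smul_mem_of_zero_mem
      (mem_ball_self one_pos) hz ht
  have hpos (t : ℝ) (ht : t ∈ Icc (0 : ℝ) 1) : 0 < 1 + t * ‖z‖ := by
    have := mul_nonneg ht.1 (norm_nonneg z)
    positivity
  have hderiv (t : ℝ) (ht : t ∈ Icc (0 : ℝ) 1) : HasDerivAt
      (fun t : ℝ => (h (0 + t * z)).re + 2 * β * Real.log (1 + t * ‖z‖))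
      ((deriv h (t * z) * z).re + 2 * β * (‖z‖ / (1 + t * ‖z‖))) t := by
    have hht : HasDerivAt h (deriv h (t * z)) (0 + t * z) :=
      (zero_add (t * z)).symm ▸ (hh.differentiableAt (isOpen_ball.mem_nhds (hmem t ht))).hasDerivAt
    exact (hasDerivAt_re_comp_add_real_mul hht).fun_add
      ((((hasDerivAt_mul_const ‖z‖).const_add 1).log (hpos t ht).ne').const_mul _)
  have hmono : MonotoneOn (fun t : ℝ => (h (0 + t * z)).re + 2 * β * Real.log (1 + t * ‖z‖))
      (Icc 0 1) := by
    refine monotoneOn_of_hasDerivWithinAt_nonneg (convex_Icc 0 1)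
      (fun t ht => (hderiv t ht).continuousAt.continuousWithinAt)
      (fun t ht => (hderiv t (interior_subset ht)).hasDerivWithinAt) fun t ht => ?_
    have htIcc := interior_subset ht
    rw [interior_Icc] at ht
    have hbound := re_id_mul_deriv_lower_bound hh hre (hmem t htIcc)
    rw [norm_mul, Complex.norm_of_nonneg ht.1.le, mul_assoc (t : ℂ), re_ofReal_mul, mul_div_assoc,
      mul_comm z] at hbound
    refine (mul_nonneg_iff_of_pos_left ht.1).1 ?_
    linarith
  have hle := hmono (left_mem_Icc.2 zero_le_one) (right_mem_Icc.2 zero_le_one) zero_le_one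
  simp only [zero_add, ofReal_zero, ofReal_one, zero_mul, one_mul, h0, zero_re, add_zero,
    Real.log_one, mul_zero] at hle
  linarith

theorem injOn_add_comp_exp (hh : DifferentiableOn ℂ h (ball 0 1))
    (hre : ∀ z ∈ ball 0 1, -1 < (z * deriv h z).re) :
    InjOn (fun ζ => ζ + h (exp ζ)) {ζ | ζ.re < 0} := by
  have hmem (ζ : ℂ) (hζ : ζ.re < 0) : exp ζ ∈ ball (0 : ℂ) 1 := by
    rwa [mem_ball_zero_iff, norm_exp, Real.exp_lt_one_iff]
  refine injOn_of_re_deriv_pos (G' := fun ζ => 1 + deriv h (exp ζ) * exp ζ)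
    (convex_halfSpace_re_lt 0) (fun ζ hζ => ?_) fun ζ hζ => ?_
  · have hhζ := (hh.differentiableAt (isOpen_ball.mem_nhds (hmem ζ hζ))).hasDerivAt
    exact (hasDerivAt_id ζ).add (hhζ.comp ζ (hasDerivAt_exp ζ))
  · rw [mul_comm, add_re, one_re]
    linarith [hre _ (hmem ζ hζ)]

-- In the coordinate `z = exp ζ` on the punctured disc, the map becomes `ζ ↦ exp (ζ + h (exp ζ))`.
theorem injOn_id_mul_exp (hh : DifferentiableOn ℂ h (ball 0 1))
    (hre : ∀ z ∈ ball 0 1, -1 < (z * deriv h z).re) :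
    InjOn (fun z => z * exp (h z)) (ball 0 1) := by
  intro z hz w hw (hzw : z * exp (h z) = w * exp (h w))
  have hzero_iff (x : ℂ) : x * exp (h x) = 0 ↔ x = 0 := by simp [exp_ne_zero]
  by_cases hz0 : z = 0
  · rw [hz0, eq_comm, ← hzero_iff w, ← hzw, hzero_iff, hz0]
  have hw0 : w ≠ 0 := fun hw0 => hz0 <| by rwa [← hzero_iff, hzw, hzero_iff]
  have hlog_re {x : ℂ} (hx : x ∈ ball 0 1) (hx0 : x ≠ 0) : (log x).re < 0 := by
    rw [log_re]
    exact Real.log_neg (norm_pos_iff.2 hx0) (mem_ball_zero_iff.1 hx)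
  have hexp {x : ℂ} (hx0 : x ≠ 0) : exp (log x + h x) = x * exp (h x) := by
    rw [exp_add, exp_log hx0]
  obtain ⟨n, hn⟩ := exp_eq_exp_iff_exists_int.1 ((hexp hz0).trans (hzw.trans (hexp hw0).symm))
  have hexp_shift : exp (log w + n * (2 * Real.pi * I)) = w := by
    rw [exp_periodic.int_mul n, exp_log hw0]
  have heq : log z = log w + n * (2 * Real.pi * I) := by
    refine injOn_add_comp_exp hh hre (hlog_re hz hz0) ?_ ?_
    · simpa using hlog_re hw hw0
    · simp only [exp_log hz0, hexp_shift, hn]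
      ring
  rw [← exp_log hz0, heq, hexp_shift]

end StarlikeExponent

section OpenImage

theorem isOpen_image_of_deriv_ne_zero {f : ℂ → ℂ} {s : Set ℂ} (hs : IsOpen s)
    (hf : DifferentiableOn ℂ f s) (hderiv : ∀ z ∈ s, deriv f z ≠ 0) : IsOpen (f '' s) := by
  refine isOpen_iff_mem_nhds.2 ?_
  rintro _ ⟨z, hz, rfl⟩
  have hstrict := (hf.analyticAt (hs.mem_nhds hz)).hasStrictDerivAt
  rw [← hstrict.map_nhds_eq (hderiv z hz)]
  exact Filter.image_mem_map (hs.mem_nhds hz)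

-- Otherwise the inverse of `f` would be a bounded entire function.
theorem image_ne_univ_of_isBounded {f : ℂ → ℂ} {s : Set ℂ} (hs : IsOpen s)
    (hb : Bornology.IsBounded s) (hf : DifferentiableOn ℂ f s) (hinj : InjOn f s)
    (hderiv : ∀ z ∈ s, deriv f z ≠ 0) : f '' s ≠ univ := by
  intro huniv
  choose g hgs hfg using fun w => huniv.symm.subset (mem_univ w)
  have hg_cont : Continuous g := by
    refine continuous_def.2 fun V hV => ?_
    have hpre : g ⁻¹' V = f '' (V ∩ s) := by
      refine Subset.antisymm (fun w hw => ⟨g w, ⟨hw, hgs w⟩, hfg w⟩) ?_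
      rintro _ ⟨z, ⟨hzV, hzs⟩, rfl⟩
      rwa [mem_preimage, hinj (hgs _) hzs (hfg _)]
    rw [hpre]
    exact isOpen_image_of_deriv_ne_zero (hV.inter hs) (hf.mono inter_subset_right)
      fun z hz => hderiv z hz.2
  have hg_diff : Differentiable ℂ g := fun w =>
    ((hf.differentiableAt (hs.mem_nhds (hgs w))).hasDerivAt.of_local_left_inverse
      hg_cont.continuousAt (hderiv _ (hgs w)) (.of_forall hfg)).differentiableAt
  have hconst := hg_diff.apply_eq_apply_of_bounded (hb.subset (range_subset_iff.2 hgs)) 0 1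
  exact zero_ne_one ((hfg 0).symm.trans ((congrArg f hconst).trans (hfg 1)))

theorem le_norm_of_mem_frontier_image_ball {E F : Type*} [NormedAddCommGroup E] [ProperSpace E]
    [NormedAddCommGroup F] {f : E → F} {m : ℝ → ℝ} {R : ℝ} {w : F}
    (hf : ContinuousOn f (ball 0 R)) (hopen : IsOpen (f '' ball 0 R)) (hm : ContinuousAt m R)
    (hle : ∀ z ∈ ball 0 R, m ‖z‖ ≤ ‖f z‖) (hw : w ∈ frontier (f '' ball 0 R)) : m R ≤ ‖w‖ := by
  rw [hopen.frontier_eq] at hw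
  obtain ⟨x, hx, hxw⟩ := mem_closure_iff_seq_limit.1 hw.1
  choose z hz hzx using hx
  obtain ⟨a, ha, φ, hφ, hza⟩ := (isCompact_closedBall (0 : E) R).tendsto_subseq
    fun n => ball_subset_closedBall (hz n)
  have hfw : Filter.Tendsto (fun n => f (z (φ n))) Filter.atTop (nhds w) := by
    simp only [hzx]
    exact hxw.comp hφ.tendsto_atTop
  have ha_notMem : a ∉ ball 0 R := fun ha' =>
    hw.2 ⟨a, ha', tendsto_nhds_unique
      ((hf.continuousAt (isOpen_ball.mem_nhds ha')).tendsto.comp hza) hfw⟩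
  have ha_norm : ‖a‖ = R :=
    (mem_closedBall_zero_iff.1 ha).antisymm (not_lt.1 (mt mem_ball_zero_iff.2 ha_notMem))
  rw [← ha_norm] at hm ⊢
  exact le_of_tendsto_of_tendsto' (hm.tendsto.comp hza.norm) hfw.norm fun n => hle _ (hz _)

end OpenImage

section Starlike

variable {α r : ℝ} {f : ℂ → ℂ} {z : ℂ}

theorem zero_mem_𝔻 : (0 : ℂ) ∈ 𝔻 :=
  mem_ball_self one_pos

theorem IsClassA.exists_eq_mul_exp (hf : IsClassA f) (hne : ∀ z ∈ 𝔻, z ≠ 0 → f z ≠ 0) :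
    ∃ h : ℂ → ℂ, DifferentiableOn ℂ h 𝔻 ∧ h 0 = 0 ∧ ∀ z ∈ 𝔻, f z = z * exp (h z) := by
  obtain ⟨hd, hf0, hf1⟩ := hf
  have hne' (z : ℂ) (hz : z ∈ ball 0 1) : dslope f 0 z ≠ 0 := by
    rcases eq_or_ne z 0 with rfl | hz0
    · rw [dslope_same, hf1]
      exact one_ne_zero
    · exact right_ne_zero_of_mul ((id_mul_dslope_eq hf0 z).symm ▸ hne z hz hz0)
  obtain ⟨h, hh, h0, hexp⟩ := exists_differentiableOn_exp_eq
    ((differentiableOn_dslope (ball_mem_nhds _ one_pos)).2 hd) hne'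
  refine ⟨h, hh, by rw [h0, dslope_same, hf1, log_one], fun z hz => ?_⟩
  rw [← hexp z hz, id_mul_dslope_eq hf0]

theorem id_mul_deriv_div_eq {h : ℂ → ℂ} (hh : DifferentiableOn ℂ h 𝔻)
    (hfh : ∀ z ∈ 𝔻, f z = z * exp (h z)) (hz : z ∈ 𝔻) (hz0 : z ≠ 0) :
    z * deriv f z / f z = 1 + z * deriv h z := by
  have hhz := (hh.differentiableAt (isOpen_ball.mem_nhds hz)).hasDerivAt
  have hfz : HasDerivAt f (1 * exp (h z) + z * (exp (h z) * deriv h z)) z :=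
    ((hasDerivAt_id z).fun_mul hhz.cexp).congr_of_eventuallyEq
      (Filter.eventuallyEq_of_mem (isOpen_ball.mem_nhds hz) hfh)
  rw [hfz.deriv, hfh z hz]
  field_simp [exp_ne_zero]

theorem StarlikeOrder.exists_eq_mul_exp (hf : StarlikeOrder α f) :
    ∃ h : ℂ → ℂ, DifferentiableOn ℂ h 𝔻 ∧ h 0 = 0 ∧ (∀ z ∈ 𝔻, f z = z * exp (h z)) ∧
      ∀ z ∈ 𝔻, z ≠ 0 → -(1 - α) < (z * deriv h z).re := by
  obtain ⟨h, hh, h0, hfh⟩ := hf.1.exists_eq_mul_exp hf.2.1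
  refine ⟨h, hh, h0, hfh, fun z hz hz0 => ?_⟩
  have hre := hf.2.2 z hz hz0
  rw [id_mul_deriv_div_eq hh hfh hz hz0, add_re, one_re] at hre
  linarith

theorem StarlikeOrder.le_one (hf : StarlikeOrder α f) : α ≤ 1 := by
  obtain ⟨h, hh, -, -, hre⟩ := hf.exists_eq_mul_exp
  have hnhds : 𝔻 ∈ nhds (0 : ℂ) := isOpen_ball.mem_nhds zero_mem_𝔻
  have hcont : ContinuousAt (fun z => (z * deriv h z).re) 0 :=
    continuous_re.continuousAt.comp
      (continuousAt_id.mul ((hh.deriv isOpen_ball).differentiableAt hnhds).continuousAt)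
  have hle : -(1 - α) ≤ ((0 : ℂ) * deriv h 0).re := by
    refine ge_of_tendsto (hcont.tendsto.mono_left (nhdsWithin_le_nhds (s := {0}ᶜ))) ?_
    filter_upwards [self_mem_nhdsWithin, mem_nhdsWithin_of_mem_nhds hnhds] with z hz0 hz
    exact (hre z hz hz0).le
  rw [zero_mul, zero_re] at hle
  linarith

theorem StarlikeOrder.exists_eq_mul_exp_le (hf : StarlikeOrder α f) :
    ∃ h : ℂ → ℂ, DifferentiableOn ℂ h 𝔻 ∧ h 0 = 0 ∧ (∀ z ∈ 𝔻, f z = z * exp (h z)) ∧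
      ∀ z ∈ 𝔻, -(1 - α) ≤ (z * deriv h z).re := by
  obtain ⟨h, hh, h0, hfh, hre⟩ := hf.exists_eq_mul_exp
  refine ⟨h, hh, h0, hfh, fun z hz => ?_⟩
  rcases eq_or_ne z 0 with rfl | hz0
  · rw [zero_mul, zero_re]
    linarith [hf.le_one]
  · exact (hre z hz hz0).le

theorem StarlikeOrder.hasMajorant (hf : StarlikeOrder α f) (hr : 0 ≤ r) (hr1 : r < 1) :
    HasMajorant f r (r * (1 - r) ^ (-(2 * (1 - α)))) := by
  obtain ⟨h, hh, h0, hfh, hre⟩ := hf.exists_eq_mul_exp_le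
  have hexp := (hasMajorant_exp _).comp hr (hasMajorant_of_re_id_mul_deriv hh h0 hre hr hr1)
  rw [Real.rpow_def_of_pos (by linarith), mul_comm (Real.log _), neg_mul, ← mul_neg]
  exact (hexp.id_mul hr).congr fun z hz => hfh z (mem_ball_zero_iff.2 (hz.trans_lt hr1))

theorem StarlikeOrder.le_norm (hf : StarlikeOrder α f) (hz : z ∈ 𝔻) :
    ‖z‖ * (1 + ‖z‖) ^ (-(2 * (1 - α))) ≤ ‖f z‖ := by
  obtain ⟨h, hh, h0, hfh, hre⟩ := hf.exists_eq_mul_exp_le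
  rw [hfh z hz, norm_mul, norm_exp, Real.rpow_def_of_pos (by positivity), mul_comm (Real.log _),
    neg_mul]
  gcongr
  exact neg_log_le_re_of_re_id_mul_deriv hh h0 hre hz

theorem StarlikeOrder.injOn (hα : 0 ≤ α) (hf : StarlikeOrder α f) : InjOn f 𝔻 := by
  obtain ⟨h, hh, -, hfh, hre⟩ := hf.exists_eq_mul_exp
  refine (injOn_id_mul_exp hh fun z hz => ?_).congr fun z hz => (hfh z hz).symm
  rcases eq_or_ne z 0 with rfl | hz0
  · simp
  · linarith [hre z hz hz0]

theorem StarlikeOrder.deriv_ne_zero (hα : 0 ≤ α) (hf : StarlikeOrder α f) (hz : z ∈ 𝔻) :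
    deriv f z ≠ 0 := by
  rcases eq_or_ne z 0 with rfl | hz0
  · rw [hf.1.2.2]
    exact one_ne_zero
  · intro hderiv
    have hre := hf.2.2 z hz hz0
    rw [hderiv, mul_zero, zero_div, zero_re] at hre
    exact hα.not_gt hre

theorem StarlikeOrder.two_rpow_le_infDist_frontier (hα : 0 ≤ α) (hf : StarlikeOrder α f) :
    2 ^ (-(2 * (1 - α))) ≤ infDist 0 (frontier (f '' 𝔻)) := by
  have hne : (frontier (f '' 𝔻)).Nonempty := nonempty_frontier_iff.2
    ⟨⟨f 0, mem_image_of_mem f zero_mem_𝔻⟩,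
      image_ne_univ_of_isBounded isOpen_ball isBounded_ball hf.1.1 (hf.injOn hα)
        fun _ => hf.deriv_ne_zero hα⟩
  have hm : ContinuousAt (fun x : ℝ => x * (1 + x) ^ (-(2 * (1 - α)))) 1 := by
    fun_prop (disch := norm_num)
  refine (le_infDist hne).2 fun w hw => ?_
  have hle := le_norm_of_mem_frontier_image_ball hf.1.1.continuousOn
    (isOpen_image_of_deriv_ne_zero isOpen_ball hf.1.1 fun _ => hf.deriv_ne_zero hα) hm
    (fun _ => hf.le_norm) hw
  rwa [one_mul, one_add_one_eq_two, ← dist_zero_left] at hle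

end Starlike

section BohrRadius

variable {s r r₀ : ℝ}

theorem le_one_third_of_one_sub_rpow_eq (hs : 1 ≤ s) (hr : r < 1)
    (heq : (1 - r) ^ s = 2 ^ s * r) : r ≤ 1 / 3 := by
  by_contra! hlt
  have h2s : (0 : ℝ) < 2 ^ s := by positivity
  have hpow : 2 ^ s * r ≤ 2 ^ s * (1 / 3) ^ s := by
    rw [← heq, ← Real.mul_rpow two_pos.le (by norm_num)]
    exact Real.rpow_le_rpow (by linarith) (by linarith) (by linarith)
  have hthird : (1 / 3 : ℝ) ^ s ≤ 1 / 3 :=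
    Real.rpow_le_self_of_le_one (by norm_num) (by norm_num) hs
  linarith [le_of_mul_le_mul_left hpow h2s]

theorem two_rpow_mul_le_one_sub_rpow (hs : 0 ≤ s) (hr₀ : r₀ ≤ 1)
    (heq : (1 - r₀) ^ s = 2 ^ s * r₀) (hr : r ≤ r₀) : 2 ^ s * r ≤ (1 - r) ^ s :=
  calc 2 ^ s * r ≤ 2 ^ s * r₀ := by gcongr
    _ = (1 - r₀) ^ s := heq.symm
    _ ≤ (1 - r) ^ s := Real.rpow_le_rpow (by linarith) (by linarith) hs

theorem mul_one_sub_rpow_neg_le (hr : r < 1) (hle : 2 ^ s * r ≤ (1 - r) ^ s) :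
    r * (1 - r) ^ (-s) ≤ 2 ^ (-s) := by
  have h1r : 0 < 1 - r := by linarith
  rw [Real.rpow_neg h1r.le, Real.rpow_neg two_pos.le, ← div_eq_mul_inv,
    div_le_iff₀ (Real.rpow_pos_of_pos h1r s), ← div_eq_inv_mul, le_div_iff₀' (by positivity)]
  exact hle

end BohrRadius

theorem stmt18_general {α r : ℝ} {f g : ℂ → ℂ} {b : ℕ → ℂ} (hα : 0 ≤ α) (hf : StarlikeOrder α f)
    (hsub : Subordinate g f) (hrep : ∀ z ∈ 𝔻, HasSum (fun k => b k * z ^ k) (g z))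
    (hr : 0 ≤ r) (hr3 : r ≤ 1 / 3) (hle : 2 ^ (2 * (1 - α)) * r ≤ (1 - r) ^ (2 * (1 - α))) :
    Summable (fun k => ‖b k‖ * r ^ k) ∧
      ∑' k, ‖b k‖ * r ^ k ≤ infDist 0 (frontier (f '' 𝔻)) := by
  have hr1 : r < 1 := by linarith
  have hbound : r * (1 - r) ^ (-(2 * (1 - α))) ≤ infDist 0 (frontier (f '' 𝔻)) :=
    (mul_one_sub_rpow_neg_le hr1 hle).trans (hf.two_rpow_le_infDist_frontier hα)
  have hg : HasMajorant g r (infDist 0 (frontier (f '' 𝔻))) :=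
    hsub.hasMajorant ((hf.hasMajorant hr hr1).mono hbound) hr hr3
  exact hg.tsum_norm_le hr fun z hz => hrep z (mem_ball_zero_iff.2 (hz.trans_lt hr1))

theorem stmt18 (α : ℝ) (hα0 : 0 ≤ α) (hα1 : α ≤ 1/2)
    (f g : ℂ → ℂ) (hf : StarlikeOrder α f)
    (hg : DifferentiableOn ℂ g 𝔻) (hg0 : g 0 = 0) (hsub : Subordinate g f)
    (b : ℕ → ℂ) (hb0 : b 0 = 0)
    (hrep : ∀ z ∈ 𝔻, HasSum (fun k => b k * z^k) (g z))
    (r₀ : ℝ) (hr₀ : 0 < r₀) (hr₀1 : r₀ < 1)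
    (heq : (1 - r₀) ^ ((2*(1-α) : ℝ)) = 2 ^ ((2*(1-α) : ℝ)) * r₀) :
    ∀ r : ℝ, 0 ≤ r → r ≤ r₀ →
      Summable (fun k : ℕ => ‖b k‖ * r^k) ∧
      ∑' k : ℕ, ‖b k‖ * r^k ≤ Metric.infDist 0 (frontier (f '' 𝔻)) :=
  fun _ hr hle => stmt18_general hα0 hf hsub hrep hr
    (hle.trans (le_one_third_of_one_sub_rpow_eq (by linarith) hr₀1 heq))
    (two_rpow_mul_le_one_sub_rpow (by linarith) hr₀1.le heq hle)
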